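/- arXiv:1202.3627 — 4 statements merged into one kernel-verified Lean document; each statement's English description precedes it below -/
import Mathlib

section
/- Let T > 0, K > 0, d ≥ 0, and define η(t) = 2K·e^{−Kt}·d/(1 − e^{−2KT}) for t ∈ [0,T]. Let φ : [0,T] → ℝ be differentiable with φ(t) ≥ 0 for all t ∈ [0,T], φ(0) = d, and φ'(t) ≤ K·φ(t) − η(t) for all t ∈ [0,T]. Then φ(T) = 0. -/
open MeasureTheory Set

/-- Coupling-success step: with the drift `η t = 2 K e^{-K t} d / (1 - e^{-2 K T})`,
a nonnegative differentiable `φ` with `φ 0 = d` and `φ' t ≤ K φ t - η t` on `[0, T]`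
vanishes at time `T`. -/
theorem stmt_1 (T K d : ℝ) (hT : 0 < T) (hK : 0 < K) (hd : 0 ≤ d)
    (φ φ' : ℝ → ℝ)
    (hφ : ∀ t ∈ Icc (0:ℝ) T, HasDerivAt φ (φ' t) t)
    (hφpos : ∀ t ∈ Icc (0:ℝ) T, 0 ≤ φ t)
    (hφ0 : φ 0 = d)
    (hle : ∀ t ∈ Icc (0:ℝ) T,
      φ' t ≤ K * φ t - 2 * K * Real.exp (-K * t) * d / (1 - Real.exp (-2 * K * T))) :
    φ T = 0 := by
  have hlt : Real.exp (-2 * K * T) < 1 := Real.exp_lt_one_iff.2 (by nlinarith [mul_pos hK hT])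
  obtain ⟨c, hc⟩ : ∃ c, c = d / (1 - Real.exp (-2 * K * T)) := ⟨_, rfl⟩
  have hcd : c * (1 - Real.exp (-2 * K * T)) = d := by
    rw [hc, div_mul_cancel₀ _ (by linarith)]
  have hexp (t : ℝ) : Real.exp (-2 * K * t) = Real.exp (-K * t) * Real.exp (-K * t) := by
    rw [← Real.exp_add]
    ring_nf
  have hderiv_exp (a t : ℝ) :
      HasDerivAt (fun s ↦ Real.exp (a * s)) (Real.exp (a * t) * a) t := by
    simpa using ((hasDerivAt_id t).const_mul a).exp
  have hderiv (t : ℝ) (ht : t ∈ Icc (0 : ℝ) T) :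
      HasDerivAt (fun s ↦ Real.exp (-K * s) * φ s - c * Real.exp (-2 * K * s))
        (Real.exp (-K * t) * -K * φ t + Real.exp (-K * t) * φ' t
          - c * (Real.exp (-2 * K * t) * (-2 * K))) t :=
    ((hderiv_exp (-K) t).mul (hφ t ht)).sub ((hderiv_exp (-2 * K) t).const_mul c)
  have hanti : AntitoneOn (fun s ↦ Real.exp (-K * s) * φ s - c * Real.exp (-2 * K * s))
      (Icc 0 T) := by
    refine antitoneOn_of_hasDerivWithinAt_nonpos (convex_Icc 0 T)
      (fun t ht ↦ (hderiv t ht).continuousAt.continuousWithinAt)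
      (fun t ht ↦ (hderiv t (interior_subset ht)).hasDerivWithinAt) fun t ht ↦ ?_
    have hdrift : φ' t ≤ K * φ t - 2 * K * Real.exp (-K * t) * c := by
      rw [hc, ← mul_div_assoc]
      exact hle t (interior_subset ht)
    rw [hexp]
    linarith [mul_le_mul_of_nonneg_left hdrift (Real.exp_pos (-K * t)).le]
  have hend := hanti (left_mem_Icc.2 hT.le) (right_mem_Icc.2 hT.le) hT.le
  simp only [mul_zero, Real.exp_zero, one_mul, mul_one, hφ0] at hend
  have hnonpos : Real.exp (-K * T) * φ T ≤ 0 := by linarith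
  exact le_antisymm (nonpos_of_mul_nonpos_right hnonpos (Real.exp_pos _))
    (hφpos T (right_mem_Icc.2 hT.le))
end

section
/- Let P be a Markov kernel from ℝ to ℝ, write Pf(x) = ∫ f(z) P(x, dz), and let C ≥ 0. Assume the Harnack inequality: for every p > 1, every bounded measurable f : ℝ → ℝ with f ≥ 0, and all x, y ∈ ℝ, (Pf(y))^p ≤ Pf^p(x) · exp(p·C·|x−y|²/(p−1)). Then the log-Harnack inequality holds: for every bounded measurable f : ℝ → ℝ with f ≥ 1 and all x, y ∈ ℝ, P(log f)(x) ≤ log Pf(y) + C·|x−y|². -/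
open MeasureTheory ProbabilityTheory

theorem integrable_of_one_le_of_le {Ω : Type*} [MeasurableSpace Ω]
    (μ : Measure Ω) [IsFiniteMeasure μ] {f : Ω → ℝ} (hf : Measurable f)
    (h1 : ∀ z, 1 ≤ f z) {M : ℝ} (hM : ∀ z, f z ≤ M) : Integrable f μ :=
  Integrable.of_bound hf.aestronglyMeasurable M (.of_forall fun z => by
    rw [Real.norm_of_nonneg (zero_le_one.trans (h1 z))]
    exact hM z)

theorem one_le_integral_of_one_le {Ω : Type*} [MeasurableSpace Ω]
    (μ : Measure Ω) [IsProbabilityMeasure μ] {f : Ω → ℝ} (hf : Integrable f μ)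
    (h1 : ∀ z, 1 ≤ f z) : 1 ≤ ∫ z, f z ∂μ := by
  simpa using integral_mono (integrable_const (1 : ℝ)) hf h1

/-- Jensen inequality for the logarithm of a bounded measurable function `f ≥ 1`. -/
theorem integral_log_le_log_integral_of_one_le {Ω : Type*} [MeasurableSpace Ω]
    (μ : Measure Ω) [IsProbabilityMeasure μ] {f : Ω → ℝ} (hf : Measurable f)
    (h1 : ∀ z, 1 ≤ f z) {M : ℝ} (hM : ∀ z, f z ≤ M) :
    ∫ z, Real.log (f z) ∂μ ≤ Real.log (∫ z, f z ∂μ) := by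
  have hfi : Integrable f μ := integrable_of_one_le_of_le μ hf h1 hM
  have hli : Integrable (fun z => Real.log (f z)) μ :=
    hfi.mono' hf.log.aestronglyMeasurable (.of_forall fun z => by
      rw [Real.norm_of_nonneg (Real.log_nonneg (h1 z))]
      exact Real.log_le_self (zero_le_one.trans (h1 z)))
  set m := ∫ z, f z ∂μ with hm
  have hm1 : 1 ≤ m := one_le_integral_of_one_le μ hfi h1
  have hm0 : 0 < m := by linarith
  have tangent : ∀ z, Real.log (f z) ≤ f z / m + (Real.log m - 1) := fun z => by
    have hz : 0 < f z := by linarith [h1 z]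
    have := Real.log_le_sub_one_of_pos (div_pos hz hm0)
    rw [Real.log_div hz.ne' hm0.ne'] at this
    linarith
  have hint := integral_mono hli ((hfi.div_const m).add (integrable_const (Real.log m - 1))) tangent
  have hval : ∫ z, (f z / m + (Real.log m - 1)) ∂μ = Real.log m := by
    rw [integral_add (hfi.div_const m) (integrable_const _), integral_div, ← hm]
    simp [hm0.ne']
  exact hint.trans_eq hval

/-- Harnack inequality with power `p` implies the log-Harnack inequality:
if `(Pf(y))^p ≤ Pf^p(x) exp(p C |x-y|²/(p-1))` for all `p > 1`, all bounded measurable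
`f ≥ 0` and all `x, y`, then `P(log f)(x) ≤ log Pf(y) + C |x-y|²` for all bounded
measurable `f ≥ 1`. -/
theorem stmt_9 (P : Kernel ℝ ℝ) [IsMarkovKernel P] (C : ℝ) (hC : 0 ≤ C)
    (harnack : ∀ p : ℝ, 1 < p → ∀ f : ℝ → ℝ, Measurable f → (∀ z, 0 ≤ f z) →
      (∃ M : ℝ, ∀ z, f z ≤ M) → ∀ x y : ℝ,
      (∫ z, f z ∂(P y)) ^ p
        ≤ (∫ z, f z ^ p ∂(P x)) * Real.exp (p * C * |x - y| ^ 2 / (p - 1))) :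
    ∀ f : ℝ → ℝ, Measurable f → (∀ z, 1 ≤ f z) → (∃ M : ℝ, ∀ z, f z ≤ M) →
      ∀ x y : ℝ,
      ∫ z, Real.log (f z) ∂(P x) ≤ Real.log (∫ z, f z ∂(P y)) + C * |x - y| ^ 2 := by
  rintro f hf h1 ⟨M, hM⟩ x y
  have bound : ∀ p : ℝ, 1 < p → ∫ z, Real.log (f z) ∂(P x) ≤
      Real.log (∫ z, f z ∂(P y)) + p / (p - 1) * (C * |x - y| ^ 2) := by
    intro p hp
    have hp0 : 0 < p := by linarith
    have hf0 : ∀ z, 0 < f z := fun z => by linarith [h1 z]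
    have hg : Measurable fun z => f z ^ p⁻¹ := hf.pow_const _
    have hg1 : ∀ z, 1 ≤ f z ^ p⁻¹ := fun z => Real.one_le_rpow (h1 z) (inv_nonneg.2 hp0.le)
    have hgM : ∀ z, f z ^ p⁻¹ ≤ M ^ p⁻¹ := fun z =>
      Real.rpow_le_rpow (hf0 z).le (hM z) (inv_nonneg.2 hp0.le)
    have hpow : ∀ z, (f z ^ p⁻¹) ^ p = f z := fun z => Real.rpow_inv_rpow (hf0 z).le hp0.ne'
    have jensen := integral_log_le_log_integral_of_one_le (P x) hg hg1 hgM
    simp_rw [Real.log_rpow (hf0 _), integral_const_mul] at jensen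
    have key := harnack p hp _ hg (fun z => zero_le_one.trans (hg1 z)) ⟨_, hgM⟩ y x
    simp_rw [hpow, abs_sub_comm y x] at key
    have hgx : 0 < ∫ z, f z ^ p⁻¹ ∂(P x) :=
      zero_lt_one.trans_le (one_le_integral_of_one_le (P x)
        (integrable_of_one_le_of_le _ hg hg1 hgM) hg1)
    have hfy : 0 < ∫ z, f z ∂(P y) :=
      zero_lt_one.trans_le (one_le_integral_of_one_le (P y)
        (integrable_of_one_le_of_le _ hf h1 hM) h1)
    have hlog := Real.log_le_log (Real.rpow_pos_of_pos hgx p) key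
    rw [Real.log_rpow hgx, Real.log_mul hfy.ne' (Real.exp_ne_zero _), Real.log_exp] at hlog
    rw [inv_mul_le_iff₀ hp0] at jensen
    calc _ ≤ _ := jensen.trans hlog
      _ = _ := by ring
  have hlim : Filter.Tendsto (fun p : ℝ => Real.log (∫ z, f z ∂(P y)) +
      (1 + (p - 1)⁻¹) * (C * |x - y| ^ 2)) Filter.atTop
      (nhds (Real.log (∫ z, f z ∂(P y)) + (1 + 0) * (C * |x - y| ^ 2))) :=
    (((tendsto_inv_atTop_zero.comp
      (Filter.tendsto_atTop_add_const_right _ (-1) Filter.tendsto_id)).const_add 1).mul_const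
        _).const_add _
  rw [add_zero, one_mul] at hlim
  refine ge_of_tendsto hlim ?_
  filter_upwards [Filter.eventually_gt_atTop 1] with p hp
  have hp1 : p - 1 ≠ 0 := by linarith
  have hratio : 1 + (p - 1)⁻¹ = p / (p - 1) := by
    field_simp
    ring
  rw [hratio]
  exact bound p hp
end

section
/- Let 0 < H < 1/2, T > 0, K̄ ≥ 0, and let φ : [0,T] → ℝ be measurable with |φ(r)| ≤ 1 + K̄·T for all r ∈ [0,T]. Then (1/(Γ(1/2−H)·T))² · ∫₀ᵀ s^{2H−1} · (∫₀ˢ r^{1/2−H}·(s−r)^{−1/2−H}·φ(r) dr)² ds ≤ (B(3/2−H, 1/2−H)/Γ(1/2−H))² · (1 + K̄·T)² / (2·(1−H)·T^{2H}), where B(a,b) = Γ(a)Γ(b)/Γ(a+b) denotes the Beta function and Γ the Gamma function. -/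
open MeasureTheory Set

/-- The Beta function `B(a,b) = Γ(a) Γ(b) / Γ(a+b)`. -/
noncomputable def Beta (a b : ℝ) : ℝ := Real.Gamma a * Real.Gamma b / Real.Gamma (a + b)

theorem Beta_pos {a b : ℝ} (ha : 0 < a) (hb : 0 < b) : 0 < Beta a b :=
  div_pos (mul_pos (Real.Gamma_pos_of_pos ha) (Real.Gamma_pos_of_pos hb))
    (Real.Gamma_pos_of_pos (add_pos ha hb))

theorem integral_rpow_mul_sub_rpow {a b s : ℝ} (ha : 0 < a) (hb : 0 < b) (hs : 0 < s) :
    ∫ r in (0:ℝ)..s, r ^ (a - 1) * (s - r) ^ (b - 1) = s ^ (a + b - 1) * Beta a b := by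
  have key := Complex.betaIntegral_scaled a b hs
  rw [Complex.betaIntegral_eq_Gamma_mul_div (a : ℂ) (b : ℂ) (by simpa) (by simpa)] at key
  apply Complex.ofReal_injective
  rw [← intervalIntegral.integral_ofReal]
  simp only [Beta, Complex.ofReal_mul, Complex.ofReal_div, ← Complex.Gamma_ofReal,
    Complex.ofReal_add, Complex.ofReal_cpow hs.le, Complex.ofReal_sub, Complex.ofReal_one]
  rw [← key]
  refine intervalIntegral.integral_congr fun r hr => ?_
  rw [uIcc_of_le hs.le] at hr
  simp only [Complex.ofReal_cpow hr.1, Complex.ofReal_cpow (sub_nonneg.2 hr.2),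
    Complex.ofReal_sub, Complex.ofReal_one]

theorem intervalIntegrable_rpow_mul_sub_rpow {a b s : ℝ} (ha : 0 < a) (hb : 0 < b)
    (hs : 0 < s) :
    IntervalIntegrable (fun r : ℝ => r ^ (a - 1) * (s - r) ^ (b - 1)) volume 0 s := by
  apply intervalIntegral.intervalIntegrable_of_integral_ne_zero
  rw [integral_rpow_mul_sub_rpow ha hb hs]
  exact (mul_pos (Real.rpow_pos_of_pos hs _) (Beta_pos ha hb)).ne'

theorem abs_integral_rpow_mul_sub_rpow_mul_le {a b s M : ℝ} (ha : 0 < a) (hb : 0 < b)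
    (hs : 0 < s) {φ : ℝ → ℝ} (hφ : ∀ r ∈ Icc (0:ℝ) s, |φ r| ≤ M) :
    |∫ r in (0:ℝ)..s, r ^ (a - 1) * (s - r) ^ (b - 1) * φ r| ≤
      s ^ (a + b - 1) * Beta a b * M := by
  rw [← integral_rpow_mul_sub_rpow ha hb hs, ← intervalIntegral.integral_mul_const,
    ← Real.norm_eq_abs]
  refine intervalIntegral.norm_integral_le_of_norm_le hs.le (ae_of_all _ fun r hr => ?_)
    ((intervalIntegrable_rpow_mul_sub_rpow ha hb hs).mul_const M)
  have hpos : 0 ≤ r ^ (a - 1) * (s - r) ^ (b - 1) :=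
    mul_nonneg (Real.rpow_nonneg hr.1.le _) (Real.rpow_nonneg (sub_nonneg.2 hr.2) _)
  rw [Real.norm_eq_abs, abs_mul, abs_of_nonneg hpos]
  exact mul_le_mul_of_nonneg_left (hφ r ⟨hr.1.le, hr.2⟩) hpos

/-- Quadratic-variation estimate of Corollary 4.1: if `|φ r| ≤ 1 + K̄ T` on `[0,T]`, then
`(1/(Γ(1/2-H) T))² ∫₀ᵀ s^{2H-1} (∫₀ˢ r^{1/2-H} (s-r)^{-1/2-H} φ r dr)² ds
  ≤ (B(3/2-H,1/2-H)/Γ(1/2-H))² (1 + K̄ T)² / (2 (1-H) T^{2H})`. -/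
theorem stmt_11 (H T Kb : ℝ) (hH0 : 0 < H) (hH : H < 1/2) (hT : 0 < T) (hKb : 0 ≤ Kb)
    (φ : ℝ → ℝ) (hmeas : Measurable φ)
    (hbound : ∀ r ∈ Icc (0:ℝ) T, |φ r| ≤ 1 + Kb * T) :
    (1 / (Real.Gamma (1/2 - H) * T)) ^ 2 *
        ∫ s in (0:ℝ)..T,
          s ^ (2*H - 1) * (∫ r in (0:ℝ)..s, r ^ (1/2 - H) * (s - r) ^ (-1/2 - H) * φ r) ^ 2
      ≤ (Beta (3/2 - H) (1/2 - H) / Real.Gamma (1/2 - H)) ^ 2 *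
          (1 + Kb * T) ^ 2 / (2 * (1 - H) * T ^ (2*H)) := by
  set B := Beta (3/2 - H) (1/2 - H)
  set M := 1 + Kb * T
  have hG : 0 < Real.Gamma (1/2 - H) := Real.Gamma_pos_of_pos (by linarith)
  have hpointwise : ∀ s ∈ Ioc (0:ℝ) T,
      ‖s ^ (2*H - 1) *
        (∫ r in (0:ℝ)..s, r ^ (1/2 - H) * (s - r) ^ (-1/2 - H) * φ r) ^ 2‖ ≤
      s ^ (1 - 2*H) * (B ^ 2 * M ^ 2) := by
    intro s hs
    have hinner := abs_integral_rpow_mul_sub_rpow_mul_le (a := 3/2 - H) (b := 1/2 - H)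
      (by linarith) (by linarith) hs.1 fun r hr => hbound r ⟨hr.1, hr.2.trans hs.2⟩
    rw [show 3/2 - H - 1 = 1/2 - H by ring, show 1/2 - H - 1 = -1/2 - H by ring,
      show 3/2 - H + (1/2 - H) - 1 = 1 - 2*H by ring] at hinner
    have hexp : s ^ (2*H - 1) * s ^ (1 - 2*H) = 1 := by
      rw [← Real.rpow_add hs.1]
      simp
    rw [norm_mul, norm_pow, Real.norm_of_nonneg (Real.rpow_nonneg hs.1.le _), Real.norm_eq_abs]
    calc _ ≤ s ^ (2*H - 1) * (s ^ (1 - 2*H) * B * M) ^ 2 :=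
          mul_le_mul_of_nonneg_left (pow_le_pow_left₀ (abs_nonneg _) hinner 2)
            (Real.rpow_nonneg hs.1.le _)
      _ = s ^ (2*H - 1) * s ^ (1 - 2*H) * (s ^ (1 - 2*H) * (B ^ 2 * M ^ 2)) := by ring
      _ = _ := by rw [hexp, one_mul]
  have hint : ∫ s in (0:ℝ)..T, s ^ (1 - 2*H) * (B ^ 2 * M ^ 2) =
      T ^ (2 - 2*H) / (2 * (1 - H)) * (B ^ 2 * M ^ 2) := by
    rw [intervalIntegral.integral_mul_const, integral_rpow (Or.inl (by linarith)),
      show 1 - 2*H + 1 = 2 - 2*H by ring, Real.zero_rpow (by linarith), sub_zero,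
      show 2 - 2*H = 2 * (1 - H) by ring]
  have houter := intervalIntegral.norm_integral_le_of_norm_le hT.le
    (ae_of_all volume hpointwise)
    ((intervalIntegral.intervalIntegrable_rpow' (by linarith)).mul_const _)
  rw [hint] at houter
  have hTpow : T ^ (2 - 2*H) = T ^ 2 / T ^ (2*H) := by
    rw [Real.rpow_sub hT, Real.rpow_two]
  have hTH : 0 < T ^ (2*H) := Real.rpow_pos_of_pos hT _
  have hH1 : 0 < 1 - H := by linarith
  calc _ ≤ (1 / (Real.Gamma (1/2 - H) * T)) ^ 2 *
        (T ^ (2 - 2*H) / (2 * (1 - H)) * (B ^ 2 * M ^ 2)) :=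
      mul_le_mul_of_nonneg_left ((le_abs_self _).trans houter) (sq_nonneg _)
    _ = _ := by
      rw [hTpow]
      field_simp
end

section
/- Let P be a Markov kernel from ℝ to ℝ, write Pg(x) = ∫ g(z) P(x, dz), let C ≥ 0 and p > 1. Let f : ℝ → ℝ be a bounded measurable function with inf f > 0, and let x, y ∈ ℝ. Set β(s) = 1 + s(p−1) and γ(s) = x + s(y−x) for s ∈ [0,1]. Assume: (i) for every s ∈ [0,1], the function z ↦ P(f^{β(s)})(z) is differentiable, and for every δ > 0 and every z ∈ ℝ, |(d/dε)|_{ε=0} P(f^{β(s)})(z + ε(y−x))| ≤ δ·[P(f^{β(s)}·log f^{β(s)})(z) − P(f^{β(s)})(z)·log P(f^{β(s)})(z)] + (C·(y−x)²/δ)·P(f^{β(s)})(z); (ii) the function (s,z) ↦ P(f^{β(s)})(z) is continuously differentiable on [0,1] × ℝ with ∂_s P(f^{β(s)})(z) = (p−1)·P(f^{β(s)}·log f)(z). Then (Pf(y))^p ≤ P(f^p)(x) · exp(p·C·(y−x)²/(p−1)). -/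
open MeasureTheory ProbabilityTheory Set

/-- Powers of a measurable function with values in `[ε, M]`, `ε > 0`, have positive integral. -/
lemma integral_rpow_pos {Ω : Type*} [MeasurableSpace Ω] (μ : Measure Ω) [IsProbabilityMeasure μ]
    {f : Ω → ℝ} (hf : Measurable f) {M ε : ℝ} (hM : ∀ z, f z ≤ M) (hε : 0 < ε)
    (hεf : ∀ z, ε ≤ f z) {b : ℝ} (hb : 0 ≤ b) : 0 < ∫ z, f z ^ b ∂μ := by
  have hint : Integrable (fun z => f z ^ b) μ := by
    refine Integrable.of_bound (hf.pow_const b).aestronglyMeasurable (M ^ b) ?_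
    filter_upwards with z
    have h0 : 0 ≤ f z := hε.le.trans (hεf z)
    rw [Real.norm_of_nonneg (Real.rpow_nonneg h0 b)]
    exact Real.rpow_le_rpow h0 (hM z) hb
  calc 0 < ε ^ b := Real.rpow_pos_of_pos hε b
    _ = ∫ _, ε ^ b ∂μ := by simp
    _ ≤ ∫ z, f z ^ b ∂μ := integral_mono (integrable_const _) hint
        fun z => Real.rpow_le_rpow hε.le (hεf z) hb

/-- Interpolation along `s ↦ (s, y + s (x - y))`: an entropy-type bound on the spatial derivative
of a positive function `F`, whose parameter derivative is `(p - 1) A`, compares `F (0, y)` with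
`F (1, x)`. -/
lemma mul_log_le_log_add_of_entropy_bound {F A : ℝ × ℝ → ℝ} {C p x y : ℝ} (hp : 1 < p)
    (hF : ContDiffOn ℝ 1 F (Icc (0 : ℝ) 1 ×ˢ univ))
    (hpos : ∀ s ∈ Icc (0 : ℝ) 1, ∀ z, 0 < F (s, z))
    (hderiv : ∀ z, ∀ s ∈ Icc (0 : ℝ) 1, HasDerivAt (fun s => F (s, z)) ((p - 1) * A (s, z)) s)
    (hgrad : ∀ s ∈ Icc (0 : ℝ) 1, ∀ δ : ℝ, 0 < δ → ∀ z : ℝ,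
      |deriv (fun ε : ℝ => F (s, z + ε * (y - x))) 0|
        ≤ δ * ((1 + s * (p - 1)) * A (s, z) - F (s, z) * Real.log (F (s, z)))
          + (C * (y - x) ^ 2 / δ) * F (s, z)) :
    p * Real.log (F (0, y)) ≤ Real.log (F (1, x)) + p * C * (y - x) ^ 2 / (p - 1) := by
  have hp1 : 0 < p - 1 := sub_pos.2 hp
  have hβ : ∀ s ∈ Icc (0 : ℝ) 1, 0 < 1 + s * (p - 1) := fun s hs => by
    have := mul_nonneg hs.1 hp1.le
    linarith
  set K := p * C * (y - x) ^ 2 / (p - 1) with hK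
  set c : ℝ → ℝ × ℝ := fun s => (s, y + s * (x - y)) with hc
  set g : ℝ → ℝ := fun s => p / (1 + s * (p - 1)) * Real.log (F (c s)) + K * s with hg
  have hcont : ContinuousOn g (Icc 0 1) := by
    have hFc : ContinuousOn (fun s => F (c s)) (Icc 0 1) :=
      hF.continuousOn.comp (by fun_prop) fun s hs => ⟨hs, mem_univ _⟩
    refine ContinuousOn.add (ContinuousOn.mul ?_ ?_) (by fun_prop)
    · exact continuousOn_const.div (by fun_prop) fun s hs => (hβ s hs).ne'
    · exact hFc.log fun s hs => (hpos s hs _).ne'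
  have hmono : MonotoneOn g (Icc 0 1) := by
    have key : ∀ s ∈ Ioo (0 : ℝ) 1, ∃ g', HasDerivAt g g' s ∧ 0 ≤ g' := by
      intro s hs
      have hs' := Ioo_subset_Icc_self hs
      have hβs := hβ s hs'
      have hFs := hpos s hs' (y + s * (x - y))
      have hL : HasFDerivAt F (fderiv ℝ F (c s)) (c s) := by
        refine ((hF.contDiffAt ?_).differentiableAt one_ne_zero).hasFDerivAt
        exact prod_mem_nhds (Icc_mem_nhds hs.1 hs.2) Filter.univ_mem
      set L := fderiv ℝ F (c s)
      have hs1 : L (1, 0) = (p - 1) * A (c s) := by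
        have h := HasFDerivAt.comp_hasDerivAt s (f := fun t : ℝ => (t, y + s * (x - y))) hL
          ((hasDerivAt_id s).prodMk (hasDerivAt_const s _))
        exact h.unique (hderiv _ s hs')
      have hz : deriv (fun ε : ℝ => F (s, y + s * (x - y) + ε * (y - x))) 0 = L (0, y - x) := by
        have hline : HasDerivAt (fun ε : ℝ => (s, y + s * (x - y) + ε * (y - x))) (0, y - x) 0 := by
          refine (hasDerivAt_const _ _).prodMk ?_
          simpa using ((hasDerivAt_id (0 : ℝ)).mul_const (y - x)).const_add (y + s * (x - y))
        exact (HasFDerivAt.comp_hasDerivAt (0 : ℝ) (by simpa [hc] using hL) hline).deriv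
      have hcd : HasDerivAt c (1, x - y) s := by
        refine (hasDerivAt_id s).prodMk ?_
        simpa using ((hasDerivAt_id s).mul_const (x - y)).const_add y
      have hLsum : L (1, x - y) = (p - 1) * A (c s) - L (0, y - x) := by
        rw [← hs1, ← map_sub]
        simp
      have hFc := hL.comp_hasDerivAt s hcd
      rw [hLsum] at hFc
      have hb : HasDerivAt (fun s => 1 + s * (p - 1)) (p - 1) s := by
        simpa using ((hasDerivAt_id s).mul_const (p - 1)).const_add 1
      have hgd := (((hasDerivAt_const s p).div hb hβs.ne').mul (hFc.log hFs.ne')).add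
        ((hasDerivAt_id s).const_mul K)
      refine ⟨_, hgd, ?_⟩
      have hbound := hgrad s hs' ((p - 1) / (1 + s * (p - 1))) (div_pos hp1 hβs) (y + s * (x - y))
      rw [hz] at hbound
      have hle := (le_abs_self _).trans hbound
      change 0 ≤ (0 * (1 + s * (p - 1)) - p * (p - 1)) / (1 + s * (p - 1)) ^ 2
          * Real.log (F (c s)) + p / (1 + s * (p - 1))
            * (((p - 1) * A (c s) - L (0, y - x)) / F (c s)) + K * 1
      change L (0, y - x) ≤ (p - 1) / (1 + s * (p - 1)) * ((1 + s * (p - 1)) * A (c s)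
        - F (c s) * Real.log (F (c s)))
          + (C * (y - x) ^ 2 / ((p - 1) / (1 + s * (p - 1)))) * F (c s) at hle
      change 0 < F (c s) at hFs
      generalize 1 + s * (p - 1) = b at *
      have hfac : 0 ≤ p / (b * F (c s)) := by positivity
      refine (mul_nonneg hfac (sub_nonneg.2 hle)).trans_eq ?_
      rw [hK]
      field_simp
      ring
    refine monotoneOn_of_deriv_nonneg (convex_Icc 0 1) hcont ?_ ?_ <;> rw [interior_Icc]
    · intro s hs
      obtain ⟨g', h, -⟩ := key s hs
      exact h.differentiableAt.differentiableWithinAt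
    · intro s hs
      obtain ⟨g', h, h0⟩ := key s hs
      rwa [h.deriv]
  have h01 := hmono (left_mem_Icc.2 zero_le_one) (right_mem_Icc.2 zero_le_one) zero_le_one
  have hp0 : p ≠ 0 := by positivity
  simpa [hg, hc, hp0] using h01

/-- Abstract interpolation argument (proof of Corollary 4.1): a gradient-entropy estimate
along the interpolation `β s = 1 + s (p-1)`, `γ s = x + s (y-x)`, together with smoothness
in the interpolation parameter, yields the Harnack inequality with power `p`. -/
theorem stmt_13 (P : Kernel ℝ ℝ) [IsMarkovKernel P] (C p : ℝ) (hC : 0 ≤ C) (hp : 1 < p)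
    (f : ℝ → ℝ) (hfmeas : Measurable f) (hfbdd : ∃ M : ℝ, ∀ z, f z ≤ M)
    (hfinf : ∃ ε : ℝ, 0 < ε ∧ ∀ z, ε ≤ f z)
    (x y : ℝ)
    (hdiff : ∀ s ∈ Icc (0:ℝ) 1,
      Differentiable ℝ (fun z => ∫ z', f z' ^ (1 + s * (p - 1)) ∂(P z)))
    (hgrad : ∀ s ∈ Icc (0:ℝ) 1, ∀ δ : ℝ, 0 < δ → ∀ z : ℝ,
      |deriv (fun ε : ℝ => ∫ z', f z' ^ (1 + s * (p - 1)) ∂(P (z + ε * (y - x)))) 0|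
        ≤ δ * ((∫ z', f z' ^ (1 + s * (p - 1)) *
                  Real.log (f z' ^ (1 + s * (p - 1))) ∂(P z))
              - (∫ z', f z' ^ (1 + s * (p - 1)) ∂(P z)) *
                  Real.log (∫ z', f z' ^ (1 + s * (p - 1)) ∂(P z)))
          + (C * (y - x) ^ 2 / δ) * ∫ z', f z' ^ (1 + s * (p - 1)) ∂(P z))
    (hsmooth : ContDiffOn ℝ 1
      (fun q : ℝ × ℝ => ∫ z', f z' ^ (1 + q.1 * (p - 1)) ∂(P q.2))
      (Icc (0:ℝ) 1 ×ˢ (univ : Set ℝ)))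
    (hderivs : ∀ z : ℝ, ∀ s ∈ Icc (0:ℝ) 1,
      HasDerivAt (fun s : ℝ => ∫ z', f z' ^ (1 + s * (p - 1)) ∂(P z))
        ((p - 1) * ∫ z', f z' ^ (1 + s * (p - 1)) * Real.log (f z') ∂(P z)) s) :
    (∫ z, f z ∂(P y)) ^ p
      ≤ (∫ z, f z ^ p ∂(P x)) * Real.exp (p * C * (y - x) ^ 2 / (p - 1)) := by
  obtain ⟨M, hM⟩ := hfbdd
  obtain ⟨ε, hε, hεf⟩ := hfinf
  have hpos : ∀ s ∈ Icc (0 : ℝ) 1, ∀ z, 0 < ∫ z', f z' ^ (1 + s * (p - 1)) ∂(P z) := by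
    intro s hs z
    have := mul_nonneg hs.1 (sub_nonneg.2 hp.le)
    exact integral_rpow_pos (P z) hfmeas hM hε hεf (by linarith)
  have hlog : ∀ s z : ℝ,
      ∫ z', f z' ^ (1 + s * (p - 1)) * Real.log (f z' ^ (1 + s * (p - 1))) ∂(P z)
        = (1 + s * (p - 1)) * ∫ z', f z' ^ (1 + s * (p - 1)) * Real.log (f z') ∂(P z) := by
    intro s z
    rw [← integral_const_mul]
    congr 1 with z'
    rw [Real.log_rpow (hε.trans_le (hεf z'))]
    ring
  have hmain := mul_log_le_log_add_of_entropy_bound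
    (A := fun q => ∫ z', f z' ^ (1 + q.1 * (p - 1)) * Real.log (f z') ∂(P q.2))
    hp hsmooth hpos hderivs fun s hs δ hδ z => by
      have h := hgrad s hs δ hδ z
      rw [hlog] at h
      exact h
  have hy := hpos 0 (left_mem_Icc.2 zero_le_one) y
  have hx := hpos 1 (right_mem_Icc.2 zero_le_one) x
  simp only [zero_mul, add_zero, Real.rpow_one, one_mul, add_sub_cancel] at hmain hy hx
  rw [Real.rpow_def_of_pos hy, ← Real.exp_log hx, ← Real.exp_add, mul_comm _ p]
  exact Real.exp_le_exp.2 hmain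
end
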